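/- Correctness of the InterMac multi-source homomorphic MAC: suppose the keys k_1, …, k_s ∈ F^{n+m} satisfy the orthogonality condition v_{i,j} · k_p = 0 for all p and all i ≠ p, j ∈ Fin g, and let the tag of each source packet be t_{i,j} = k_i · v_{i,j}. Then for any coefficients α_{i,j} ∈ F, the combined tag equals the verification value: (Σ_{i,j} α_{i,j} · v_{i,j}) · (k_1 + ⋯ + k_s) = Σ_{i,j} α_{i,j} · t_{i,j}. Hence Verify accepts every linear combination of the committed source packets together with the correspondingly combined tag. -/

import Mathlib

theorem srcIdx_lt {s g : ℕ} (i : Fin s) (j : Fin g) : g * i.1 + j.1 < s * g := by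
  have hi := i.2; have hj := j.2
  calc g * i.1 + j.1 < g * (i.1 + 1) := by rw [Nat.mul_add, Nat.mul_one]; omega
    _ ≤ g * s := Nat.mul_le_mul_left g hi
    _ = s * g := Nat.mul_comm g s

/-- The index `g·i + j` of the augmentation coordinate of the source packet `v_{i,j}`. -/
def srcIdx {s g : ℕ} (i : Fin s) (j : Fin g) : Fin (s * g) :=
  ⟨g * i.1 + j.1, srcIdx_lt i j⟩

/-- The augmented source packet `v_{i,j} = (v̂_{i,j}, e_{g·i+j}) ∈ F^{n+m}`, `m = s·g`. -/
def pkt {q s g n : ℕ} (vhat : Fin s → Fin g → Fin n → ZMod q)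
    (i : Fin s) (j : Fin g) : Fin (n + s * g) → ZMod q :=
  Fin.append (vhat i j) (Pi.single (srcIdx i j) 1)

section Orthogonality

variable {R ι N : Type*} [Fintype ι] [Fintype N]

theorem dotProduct_sum_eq_of_orthogonal [NonUnitalNonAssocSemiring R] {x : N → R}
    {k : ι → N → R} {i : ι} (hx : ∀ p, i ≠ p → x ⬝ᵥ k p = 0) :
    x ⬝ᵥ ∑ p, k p = x ⬝ᵥ k i := by
  rw [dotProduct_sum]
  exact Fintype.sum_eq_single i fun p hp => hx p hp.symm

theorem intermac_correctness_general [NonUnitalSemiring R] {κ : ι → Type*}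
    [∀ i, Fintype (κ i)] (v : ∀ i, κ i → N → R) (k : ι → N → R)
    (horth : ∀ p i, i ≠ p → ∀ j, v i j ⬝ᵥ k p = 0)
    (t : ∀ i, κ i → R) (ht : ∀ i j, t i j = v i j ⬝ᵥ k i) (α : ∀ i, κ i → R) :
    (∑ i, ∑ j, α i j • v i j) ⬝ᵥ ∑ p, k p = ∑ i, ∑ j, α i j * t i j := by
  have verify_packet (i : ι) (j : κ i) : v i j ⬝ᵥ ∑ p, k p = t i j :=
    (dotProduct_sum_eq_of_orthogonal fun p hp => horth p i hp j).trans (ht i j).symm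
  simp only [sum_dotProduct, smul_dotProduct, verify_packet, smul_eq_mul]

end Orthogonality

/-- correctness of the InterMac multi-source homomorphic MAC.
If the keys satisfy `v_{i,j} · k_p = 0` for all `i ≠ p`, and `t_{i,j} = k_i · v_{i,j}`,
then for any coefficients `α`, the combined tag equals the verification value:
`(Σ_{i,j} α_{i,j} • v_{i,j}) · (k_1 + ⋯ + k_s) = Σ_{i,j} α_{i,j} · t_{i,j}`. -/
theorem intermac_correctness
    (q s g n : ℕ) (hq : q.Prime) (hs : 0 < s) (hg : 0 < g) (hn : 0 < n)
    (vhat : Fin s → Fin g → Fin n → ZMod q)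
    (k : Fin s → Fin (n + s * g) → ZMod q)
    (horth : ∀ p i : Fin s, i ≠ p → ∀ j : Fin g,
      (∑ r : Fin (n + s * g), pkt vhat i j r * k p r) = 0)
    (t : Fin s → Fin g → ZMod q)
    (ht : ∀ (i : Fin s) (j : Fin g),
      t i j = ∑ r : Fin (n + s * g), k i r * pkt vhat i j r)
    (α : Fin s → Fin g → ZMod q) :
    (∑ r : Fin (n + s * g),
        (∑ i : Fin s, ∑ j : Fin g, α i j • pkt vhat i j) r * (∑ p : Fin s, k p) r)
      = ∑ i : Fin s, ∑ j : Fin g, α i j * t i j :=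
  intermac_correctness_general (pkt vhat) k horth t
    (fun i j => (ht i j).trans (dotProduct_comm (k i) (pkt vhat i j))) α
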